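/- Assume u0 < l2 and u1 < l3, and let t be a real number (the robustness threshold). If IoU(v) ≥ t for every quadruple v = (v0, v1, v2, v3) with v_i ∈ {l_i, u_i} for each i (the 16 vertices of the hyperrectangle), then IoU(b) ≥ t for every quadruple b belonging to the box interval [l, u]. In particular, any set of predicted boxes contained in [l, u] satisfies the robustness guarantee with threshold t. -/

import Mathlib

/-!
For `t ≤ 0` the claim holds because IoU is nonnegative. For `t > 0`, write `p`, `q` for the signed
horizontal and vertical overlaps `min z2 g2 - max z0 g0` and `min z3 g3 - max z1 g1`. Since boxes
in the interval have positive side lengths, the denominator of IoU is positive, and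
`t ≤ IoU` is equivalent to `0 < p`, `0 < q` and
`t * (area + area gt) ≤ (1 + t) * (p * q)` (`le_iou_iff`).

With three coordinates fixed, `p` (or `q`) is a concave function of the remaining one and the area
is affine, so this condition cuts out a convex set, that is, an interval (`ordConnected_overlapCond`).
It therefore passes from the two endpoints of a coordinate range to the whole range, and doing so
one coordinate at a time leads from the vertices to every box. The truncation at `0` in the
intersection area, which is not concave, is harmless because `t > 0` forces the overlaps at the
vertices to be positive.
-/

/-- Area of a box given by corner coordinates `(z0, z1)` (bottom-left) and
`(z2, z3)` (upper-right). -/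
noncomputable def area (z0 z1 z2 z3 : ℝ) : ℝ := (z2 - z0) * (z3 - z1)

/-- Area of the intersection of the box `(z0, z1, z2, z3)` with the
ground-truth box `(g0, g1, g2, g3)`. -/
noncomputable def interArea (g0 g1 g2 g3 z0 z1 z2 z3 : ℝ) : ℝ :=
  max 0 (min z2 g2 - max z0 g0) * max 0 (min z3 g3 - max z1 g1)

/-- Intersection over union of the box `(z0, z1, z2, z3)` with the
ground-truth box `(g0, g1, g2, g3)`. -/
noncomputable def iou (g0 g1 g2 g3 z0 z1 z2 z3 : ℝ) : ℝ :=
  interArea g0 g1 g2 g3 z0 z1 z2 z3 /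
    (area z0 z1 z2 z3 + area g0 g1 g2 g3 - interArea g0 g1 g2 g3 z0 z1 z2 z3)

/-- The condition `t ≤ IoU` with denominators cleared, in terms of the signed overlaps `p`, `q` and
side lengths `w`, `h` of a box along the two axes; `G` is the area of the ground-truth box. -/
def OverlapCond (t G p w q h : ℝ) : Prop :=
  0 < p ∧ 0 < q ∧ t * (w * h + G) ≤ (1 + t) * (p * q)

lemma OverlapCond.swap {t G p w q h : ℝ} (H : OverlapCond t G p w q h) :
    OverlapCond t G q h p w :=
  ⟨H.2.1, H.1, by rw [mul_comm h w, mul_comm q p]; exact H.2.2⟩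

lemma ordConnected_overlapCond {t G q h : ℝ} (ht : 0 < t) (hh : 0 ≤ h) {p w : ℝ → ℝ}
    (hp : ConcaveOn ℝ Set.univ p) (hw : ConvexOn ℝ Set.univ w) :
    {z | OverlapCond t G (p z) (w z) q h}.OrdConnected := by
  apply Convex.ordConnected
  rintro x ⟨hx, hq, hx'⟩ y ⟨hy, -, hy'⟩ a b ha hb hab
  have h1 := hp.2 (Set.mem_univ x) (Set.mem_univ y) ha hb hab
  have h2 := hw.2 (Set.mem_univ x) (Set.mem_univ y) ha hb hab
  simp only [smul_eq_mul] at h1 h2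
  refine ⟨?_, hq, ?_⟩
  · refine lt_of_lt_of_le ?_ h1
    rcases ha.eq_or_lt with rfl | ha
    · have : b = 1 := by linarith
      simpa [this] using hy
    · positivity
  · simp only [smul_eq_mul]
    calc t * (w (a * x + b * y) * h + G)
        ≤ t * ((a * w x + b * w y) * h + G) := by gcongr
      _ = a * (t * (w x * h + G)) + b * (t * (w y * h + G)) := by
          have : b = 1 - a := by linarith
          subst this; ring
      _ ≤ a * ((1 + t) * (p x * q)) + b * ((1 + t) * (p y * q)) := by gcongr
      _ = (1 + t) * ((a * p x + b * p y) * q) := by ring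
      _ ≤ (1 + t) * (p (a * x + b * y) * q) := by gcongr

/-- The passage from the four endpoint pairs to all intervals along one axis, the other axis
being fixed. -/
lemma overlapCond_of_endpoints {t G q h g0 g2 l0 u0 l2 u2 : ℝ} (ht : 0 < t) (hh : 0 ≤ h)
    (H : ∀ v0 v2, (v0 = l0 ∨ v0 = u0) → (v2 = l2 ∨ v2 = u2) →
      OverlapCond t G (min v2 g2 - max v0 g0) (v2 - v0) q h)
    {z0 z2 : ℝ} (h0 : z0 ∈ Set.Icc l0 u0) (h2 : z2 ∈ Set.Icc l2 u2) :
    OverlapCond t G (min z2 g2 - max z0 g0) (z2 - z0) q h := by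
  have hid : ConcaveOn ℝ Set.univ (fun z : ℝ => z) := concaveOn_id convex_univ
  have hid' : ConvexOn ℝ Set.univ (fun z : ℝ => z) := convexOn_id convex_univ
  have move0 : ∀ v2, (v2 = l2 ∨ v2 = u2) →
      OverlapCond t G (min v2 g2 - max z0 g0) (v2 - z0) q h := fun v2 hv2 =>
    (ordConnected_overlapCond (p := fun z => min v2 g2 - max z g0) (w := fun z => v2 - z) ht hh
      ((concaveOn_const _ convex_univ).sub (hid'.sup (convexOn_const _ convex_univ)))
      ((convexOn_const _ convex_univ).sub hid)).out
      (H l0 v2 (.inl rfl) hv2) (H u0 v2 (.inr rfl) hv2) h0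
  exact (ordConnected_overlapCond (p := fun z => min z g2 - max z0 g0) (w := fun z => z - z0) ht hh
      ((hid.inf (concaveOn_const _ convex_univ)).sub (convexOn_const _ convex_univ))
      (hid'.sub (concaveOn_const _ convex_univ))).out
      (move0 l2 (.inl rfl)) (move0 u2 (.inr rfl)) h2

lemma interArea_nonneg (g0 g1 g2 g3 z0 z1 z2 z3 : ℝ) :
    0 ≤ interArea g0 g1 g2 g3 z0 z1 z2 z3 :=
  mul_nonneg (le_max_left _ _) (le_max_left _ _)

lemma union_pos {g0 g1 g2 g3 z0 z1 z2 z3 : ℝ} (hg02 : g0 < g2) (hg13 : g1 < g3)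
    (h02 : z0 < z2) (h13 : z1 < z3) :
    0 < area z0 z1 z2 z3 + area g0 g1 g2 g3 - interArea g0 g1 g2 g3 z0 z1 z2 z3 := by
  have ha : 0 < area z0 z1 z2 z3 := mul_pos (sub_pos.2 h02) (sub_pos.2 h13)
  have hI : interArea g0 g1 g2 g3 z0 z1 z2 z3 ≤ area g0 g1 g2 g3 :=
    mul_le_mul
      (max_le (sub_nonneg.2 hg02.le) (sub_le_sub (min_le_right _ _) (le_max_right _ _)))
      (max_le (sub_nonneg.2 hg13.le) (sub_le_sub (min_le_right _ _) (le_max_right _ _)))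
      (le_max_left _ _) (sub_nonneg.2 hg02.le)
  linarith

lemma le_iou_iff {g0 g1 g2 g3 z0 z1 z2 z3 t : ℝ} (hg02 : g0 < g2) (hg13 : g1 < g3)
    (h02 : z0 < z2) (h13 : z1 < z3) (ht : 0 < t) :
    t ≤ iou g0 g1 g2 g3 z0 z1 z2 z3 ↔
      OverlapCond t (area g0 g1 g2 g3) (min z2 g2 - max z0 g0) (z2 - z0)
        (min z3 g3 - max z1 g1) (z3 - z1) := by
  have hU := union_pos hg02 hg13 h02 h13
  unfold iou
  rw [le_div_iff₀ hU]
  constructor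
  · intro H
    have hI : 0 < interArea g0 g1 g2 g3 z0 z1 z2 z3 := lt_of_lt_of_le (mul_pos ht hU) H
    have hp : 0 < min z2 g2 - max z0 g0 := by
      by_contra hc
      simp [interArea, max_eq_left (not_lt.1 hc)] at hI
    have hq : 0 < min z3 g3 - max z1 g1 := by
      by_contra hc
      simp [interArea, max_eq_left (not_lt.1 hc)] at hI
    refine ⟨hp, hq, ?_⟩
    rw [interArea, max_eq_right hp.le, max_eq_right hq.le, area] at H
    linarith
  · rintro ⟨hp, hq, H⟩
    rw [interArea, max_eq_right hp.le, max_eq_right hq.le, area]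
    linarith

theorem stmt_19
    (g0 g1 g2 g3 : ℝ) (hg02 : g0 < g2) (hg13 : g1 < g3)
    (l0 l1 l2 l3 u0 u1 u2 u3 : ℝ)
    (hlu0 : l0 ≤ u0) (hlu1 : l1 ≤ u1) (hlu2 : l2 ≤ u2) (hlu3 : l3 ≤ u3)
    (hl02 : l0 ≤ l2) (hu02 : u0 ≤ u2) (hl13 : l1 ≤ l3) (hu13 : u1 ≤ u3)
    (hcorner0 : u0 < l2) (hcorner1 : u1 < l3)
    (t : ℝ)
    (hvert : ∀ v0 v1 v2 v3 : ℝ,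
      (v0 = l0 ∨ v0 = u0) → (v1 = l1 ∨ v1 = u1) →
      (v2 = l2 ∨ v2 = u2) → (v3 = l3 ∨ v3 = u3) →
      t ≤ iou g0 g1 g2 g3 v0 v1 v2 v3) :
    ∀ z0 z1 z2 z3 : ℝ,
      l0 ≤ z0 → z0 ≤ u0 → l1 ≤ z1 → z1 ≤ u1 →
      l2 ≤ z2 → z2 ≤ u2 → l3 ≤ z3 → z3 ≤ u3 →
      t ≤ iou g0 g1 g2 g3 z0 z1 z2 z3 := by
  intro z0 z1 z2 z3 hl0 hu0 hl1 hu1 hl2 hu2 hl3 hu3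
  have h02 : z0 < z2 := by linarith
  have h13 : z1 < z3 := by linarith
  rcases le_or_gt t 0 with ht | ht
  · exact ht.trans (div_nonneg (interArea_nonneg _ _ _ _ _ _ _ _)
      (union_pos hg02 hg13 h02 h13).le)
  rw [le_iou_iff hg02 hg13 h02 h13 ht]
  have horiz : ∀ v1 v3, (v1 = l1 ∨ v1 = u1) → (v3 = l3 ∨ v3 = u3) →
      OverlapCond t (area g0 g1 g2 g3) (min z2 g2 - max z0 g0) (z2 - z0)
        (min v3 g3 - max v1 g1) (v3 - v1) := by
    intro v1 v3 hv1 hv3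
    have hv13 : v1 < v3 := by
      rcases hv1 with rfl | rfl <;> rcases hv3 with rfl | rfl <;> linarith
    refine overlapCond_of_endpoints ht (sub_nonneg.2 hv13.le) (fun v0 v2 hv0 hv2 => ?_)
      ⟨hl0, hu0⟩ ⟨hl2, hu2⟩
    have hv02 : v0 < v2 := by
      rcases hv0 with rfl | rfl <;> rcases hv2 with rfl | rfl <;> linarith
    exact (le_iou_iff hg02 hg13 hv02 hv13 ht).1 (hvert v0 v1 v2 v3 hv0 hv1 hv2 hv3)
  exact (overlapCond_of_endpoints ht (sub_nonneg.2 h02.le)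
    (fun v1 v3 hv1 hv3 => (horiz v1 v3 hv1 hv3).swap) ⟨hl1, hu1⟩ ⟨hl3, hu3⟩).swap
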